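/- arXiv:1601.06501 — 2 statements merged into one kernel-verified Lean document; each statement's English description precedes it below -/
import Mathlib

section
/- Let s, g, w ∈ ℕ and let b ≥ gs be a prime. Then the Chen–Skriganov digital net P over F_b consisting of b^{gw} points in [0,1)^s satisfies κ(P) ≥ g + 1 and μ_1(P) ≥ gw + 1. -/
/-!
The row of `C_j` with 0-based index `u = l * w + i` lists the values of the functional
`f ↦ (hasseDeriv i f)(β_{j,l})` on the monomials `1, X, …, X^(gw-1)`. Take multiplicities `m_{j,l}`
with `∑ m_{j,l} ≤ gw`. By Hermite interpolation the rows with `i < m_{j,l}` are linearly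
independent: for each of them the polynomial `(X - β_{j,l})^i ∏ (X - β_q)^{m_q}`, with `q` running
over the other nodes, has degree `< gw` and is killed by every functional except those at
`β_{j,l}` of order at least `i`, so the evaluation matrix is triangular.

A nonzero `k` in the dual net is a linear relation between the rows at which its digits are
nonzero, so multiplicities covering all these rows must satisfy `∑ m_{j,l} > gw`. Covering each
block that contains a nonzero digit by `m_{j,l} = w` gives `gw < κ(k) w`. Covering the first
`μ_1(k_j)` rows of `C_j` by `m_{j,l} = min (w, μ_1(k_j) - l w)` gives `gw < μ_1(k)`.
-/

open scoped BigOperators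

/-- The `i`-th digit (starting from `i = 0`) of the `b`-adic expansion of `k`. -/
def bdigit (b k i : ℕ) : ℕ := k / b ^ i % b

/-- The set of indices of nonzero `b`-adic digits of `k`. -/
def bsupp (b k : ℕ) : Finset ℕ := (Finset.range (k + 1)).filter fun i => bdigit b k i ≠ 0

/-- The Hamming metric `κ(k)`: the number of nonzero `b`-adic digits of `k`. -/
def hamming (b k : ℕ) : ℕ := (bsupp b k).card

/-- The Dick metric `μ_α(k)`: the sum of the `min(v, α)` largest exponents-plus-one
`a_1 > a_2 > ⋯` of the nonzero `b`-adic digits of `k`. -/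
def dick (b α k : ℕ) : ℕ := ((((bsupp b k).sort (· ≤ ·)).reverse.take α).map (· + 1)).sum

/-- Digitwise addition `k ⊕ l` modulo `b` of the `b`-adic digits. -/
def dadd (b k l : ℕ) : ℕ :=
  ∑ i ∈ Finset.range (k + l + 1), (bdigit b k i + bdigit b l i) % b * b ^ i

/-- Digitwise subtraction `k ⊖ l` modulo `b` of the `b`-adic digits. -/
def dsub (b k l : ℕ) : ℕ :=
  ∑ i ∈ Finset.range (k + l + 1), (bdigit b k i + (b - bdigit b l i)) % b * b ^ i

/-- Hamming metric of a vector: sum over coordinates. -/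
def hammingVec (b : ℕ) {s : ℕ} (k : Fin s → ℕ) : ℕ := ∑ j, hamming b (k j)

/-- Dick metric of a vector: sum over coordinates. -/
def dickVec (b α : ℕ) {s : ℕ} (k : Fin s → ℕ) : ℕ := ∑ j, dick b α (k j)

/-- The column vector of the first `n` `b`-adic digits of `k`, as a vector over `F_b = ZMod b`. -/
def trv (b n : ℕ) (k : ℕ) : Fin n → ZMod b := fun i => (bdigit b k i.1 : ZMod b)

/-- The dual net `P⊥` of the digital net with generating matrices `C`. -/
def dualNet (b : ℕ) {s n m : ℕ} (C : Fin s → Matrix (Fin n) (Fin m) (ZMod b)) :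
    Set (Fin s → ℕ) :=
  {k | (∀ j, k j < b ^ n) ∧ ∑ j, ((C j).transpose).mulVec (trv b n (k j)) = 0}

/-- The dual net `P∞⊥` of the digital net with generating matrices `C` (no upper bound
on the components of `k`). -/
def dualNetInf (b : ℕ) {s n m : ℕ} (C : Fin s → Matrix (Fin n) (Fin m) (ZMod b)) :
    Set (Fin s → ℕ) :=
  {k | ∑ j, ((C j).transpose).mulVec (trv b n (k j)) = 0}

/-- The `h`-th point of the digital net generated by the matrices `C` over `ZMod b`:
its `j`-th coordinate is `∑_{i=1}^n ξ_i b^{-i}` with `(ξ_1,…,ξ_n)ᵀ = C_j · (η_0,…,η_{m-1})ᵀ`,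
where `η` are the `b`-adic digits of `h`. -/
noncomputable def netPoint (b : ℕ) {s n m : ℕ} (C : Fin s → Matrix (Fin n) (Fin m) (ZMod b))
    (h : ℕ) : Fin s → ℝ :=
  fun j => ∑ i : Fin n,
    (((C j).mulVec (fun v : Fin m => (bdigit b h v.1 : ZMod b)) i).val : ℝ) / (b : ℝ) ^ (i.1 + 1)

/-- Sum of the `α` largest elements of a finite set of (0-based) row indices, counted
1-based, i.e. each index `i` contributes `i + 1`. -/
def topSum (α : ℕ) (R : Finset ℕ) : ℕ := (((R.sort (· ≤ ·)).reverse.take α).map (· + 1)).sum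

/-- The digital net with generating matrices `C_1,…,C_s ∈ F_b^{n×m}` is an order `α`
digital `(t,m,s)`-net: for every choice of rows `i_{j,v_j} < ⋯ < i_{j,1}` from each `C_j`
such that the 1-based indices of the `min(α, v_j)` largest chosen rows of each matrix sum
to at most `αm - t`, the chosen rows are linearly independent over `F_b`. -/
def isOrderNet (b α t m : ℕ) {s n : ℕ} (C : Fin s → Matrix (Fin n) (Fin m) (ZMod b)) : Prop :=
  ∀ R : Fin s → Finset (Fin n),
    (∑ j, topSum α ((R j).image Fin.val)) ≤ α * m - t →
    LinearIndependent (ZMod b) fun p : Σ j : Fin s, {i : Fin n // i ∈ R j} => C p.1 p.2.1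

/-- The minimum Dick metric `μ_α(P)` of the digital net with generating matrices `C`,
namely the minimum of `μ_α(k)` over nonzero elements `k` of the dual net. -/
noncomputable def minDick (b α : ℕ) {s n m : ℕ}
    (C : Fin s → Matrix (Fin n) (Fin m) (ZMod b)) : ℕ :=
  sInf (dickVec b α '' {k | k ∈ dualNet b C ∧ k ≠ 0})

/-- The minimum Hamming metric `κ(P)` of the digital net with generating matrices `C`. -/
noncomputable def minHamming (b : ℕ) {s n m : ℕ}
    (C : Fin s → Matrix (Fin n) (Fin m) (ZMod b)) : ℕ :=
  sInf (hammingVec b '' {k | k ∈ dualNet b C ∧ k ≠ 0})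

/-- The Chen–Skriganov generating matrix (for one coordinate `j`, with row parameters
`βr l = β_{j,l}`): the entry in (1-based) row `u = (l-1)w + i` and column `v` is
`binom(v-1, i-1) · β_{j,l}^{v-i}` (which vanishes when `v < i` since the binomial
coefficient is `0`). Indices here are 0-based. -/
def csMatrix (b w n : ℕ) (βr : ℕ → ZMod b) : Matrix (Fin n) (Fin n) (ZMod b) :=
  Matrix.of fun u v =>
    (Nat.choose v.1 (u.1 % w) : ZMod b) * βr (u.1 / w) ^ (v.1 - u.1 % w)

open scoped nonZeroDivisors

lemma linearIndependent_of_triangular {R M ι : Type*} [CommRing R] [AddCommGroup M] [Module R M]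
    [PartialOrder ι] [WellFoundedGT ι] {v : ι → M} (φ : ι → M →ₗ[R] R)
    (diag : ∀ i, φ i (v i) ∈ R⁰) (triang : ∀ i j, ¬ i ≤ j → φ i (v j) = 0) :
    LinearIndependent R v := by
  rw [linearIndependent_iff']
  intro t c hc i
  induction i using WellFoundedGT.induction with
  | ind i ih =>
    intro hi
    have off_diag : ∀ j ∈ t, j ≠ i → c j * φ i (v j) = 0 := by
      intro j hj hji
      by_cases hij : i ≤ j
      · rw [ih j (lt_of_le_of_ne hij hji.symm) hj, zero_mul]
      · rw [triang i j hij, mul_zero]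
    have relation : ∑ j ∈ t, c j * φ i (v j) = 0 := by simpa using congrArg (φ i) hc
    rw [Finset.sum_eq_single_of_mem i hi off_diag] at relation
    exact (mul_right_mem_nonZeroDivisors_eq_zero_iff (diag i)).1 relation

section HermiteInterpolation

open Polynomial

/-- The functional `f ↦ (hasseDeriv i f).eval r` on polynomials of degree `< N`, given by its
values on the monomials `X ^ v`. It vanishes at `v < i`, since there `v.choose i = 0`. -/
def hermiteRow {R : Type*} [CommSemiring R] (N : ℕ) (r : R) (i : ℕ) : Fin N → R :=
  fun v => (v.1.choose i : R) * r ^ (v.1 - i)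

lemma coeff_dotProduct_hermiteRow {R : Type*} [CommSemiring R] {N : ℕ} {f : R[X]}
    (hf : f.natDegree < N) (r : R) (i : ℕ) :
    (fun v : Fin N => f.coeff v) ⬝ᵥ hermiteRow N r i = (hasseDeriv i f).eval r := by
  rw [hasseDeriv_apply, sum_over_range' _ (by simp) N hf, eval_finsetSum, Finset.sum_range]
  refine Finset.sum_congr rfl fun v _ => ?_
  rw [eval_monomial, hermiteRow]
  ring

variable {R : Type*} [CommRing R]

lemma eval_hasseDeriv_X_sub_C_pow_mul (r : R) (n i : ℕ) (q : R[X]) :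
    (hasseDeriv i ((X - C r) ^ n * q)).eval r =
      if n ≤ i then (hasseDeriv (i - n) q).eval r else 0 := by
  have taylor_eq : taylor r ((X - C r) ^ n * q) = X ^ n * taylor r q := by
    simp [taylor_mul, taylor_pow]
  rw [← taylor_coeff, taylor_eq, coeff_X_pow_mul', taylor_coeff]

section HermitePoly

variable {ι : Type*} [Fintype ι] [DecidableEq ι] (β : ι → R) (m : ι → ℕ)

/-- The Hermite interpolation polynomial that vanishes to order `i` at the node `β p` and to the
full order `m q` at every other node `β q`. -/
noncomputable def hermitePoly (p : ι) (i : ℕ) : R[X] :=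
  (X - C (β p)) ^ i * ∏ q ∈ Finset.univ.erase p, (X - C (β q)) ^ m q

lemma natDegree_hermitePoly_lt {p : ι} {i : ℕ} (hi : i < m p) :
    (hermitePoly β m p i).natDegree < ∑ q, m q := by
  have natDegree_node_pow_le (q : ι) (n : ℕ) : ((X - C (β q)) ^ n).natDegree ≤ n := by
    simpa using natDegree_pow_le_of_le n (natDegree_X_sub_C_le (β q))
  calc (hermitePoly β m p i).natDegree
      ≤ i + ∑ q ∈ Finset.univ.erase p, m q :=
        natDegree_mul_le_of_le (natDegree_node_pow_le p i) <|
          (natDegree_prod_le _ _).trans <|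
            Finset.sum_le_sum fun q _ => natDegree_node_pow_le q (m q)
    _ < m p + ∑ q ∈ Finset.univ.erase p, m q := by gcongr
    _ = ∑ q, m q := Finset.add_sum_erase _ m (Finset.mem_univ p)

lemma eval_hasseDeriv_hermitePoly_of_lt {p : ι} {i i' : ℕ} (h : i' < i) :
    (hasseDeriv i' (hermitePoly β m p i)).eval (β p) = 0 := by
  rw [hermitePoly, eval_hasseDeriv_X_sub_C_pow_mul, if_neg h.not_ge]

lemma eval_hasseDeriv_hermitePoly_of_ne {p q : ι} (hqp : q ≠ p) (i : ℕ) {i' : ℕ} (h : i' < m q) :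
    (hasseDeriv i' (hermitePoly β m p i)).eval (β q) = 0 := by
  have dvd : (X - C (β q)) ^ m q ∣ hermitePoly β m p i :=
    (Finset.dvd_prod_of_mem (fun q => (X - C (β q)) ^ m q)
      (Finset.mem_erase.2 ⟨hqp, Finset.mem_univ q⟩)).mul_left _
  obtain ⟨f, hf⟩ := dvd
  rw [hf, eval_hasseDeriv_X_sub_C_pow_mul, if_neg h.not_ge]

variable {β}

lemma eval_hasseDeriv_hermitePoly_self_mem_nonZeroDivisors
    (hβ : Pairwise fun p q => β p - β q ∈ R⁰) (p : ι) (i : ℕ) :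
    (hasseDeriv i (hermitePoly β m p i)).eval (β p) ∈ R⁰ := by
  rw [hermitePoly, eval_hasseDeriv_X_sub_C_pow_mul, if_pos le_rfl, Nat.sub_self, hasseDeriv_zero,
    LinearMap.id_apply, eval_prod]
  refine prod_mem fun q hq => ?_
  simpa using pow_mem (hβ (Finset.ne_of_mem_erase hq).symm) (m q)

end HermitePoly

/- Comparing `⟨p, i⟩` and `⟨q, i'⟩` only when `p = q`, as the order of a sigma type does, makes the
`hermitePoly`s a triangular dual system. -/
theorem linearIndependent_hermiteRow {ι : Type*} [Fintype ι] {β : ι → R}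
    (hβ : Pairwise fun p q => β p - β q ∈ R⁰) {m : ι → ℕ} {N : ℕ} (hN : ∑ p, m p ≤ N) :
    LinearIndependent R fun x : Σ p, Fin (m p) => hermiteRow N (β x.1) x.2 := by
  classical
  have apply_eq (x y : Σ p, Fin (m p)) :
      dotProductBilin R R (fun v : Fin N => (hermitePoly β m x.1 x.2).coeff v)
        (hermiteRow N (β y.1) y.2) = (hasseDeriv y.2 (hermitePoly β m x.1 x.2)).eval (β y.1) :=
    coeff_dotProduct_hermiteRow ((natDegree_hermitePoly_lt β m x.2.2).trans_le hN) _ _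
  refine linearIndependent_of_triangular
    (fun x => dotProductBilin R R fun v : Fin N => (hermitePoly β m x.1 x.2).coeff v)
    (fun x => ?_) ?_
  · rw [apply_eq]
    exact eval_hasseDeriv_hermitePoly_self_mem_nonZeroDivisors m hβ x.1 x.2
  · rintro ⟨p, i⟩ ⟨q, i'⟩ hle
    rw [apply_eq]
    obtain rfl | hqp := eq_or_ne q p
    · exact eval_hasseDeriv_hermitePoly_of_lt β m
        (not_le.1 fun h => hle (Sigma.mk_le_mk_iff.2 h))
    · exact eval_hasseDeriv_hermitePoly_of_ne β m hqp i i'.2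

end HermiteInterpolation

section Digits

variable {b : ℕ}

lemma exists_bdigit_ne_zero {k n : ℕ} (hb : 1 < b) (hk : k ≠ 0) (hn : k < b ^ n) :
    ∃ u < n, bdigit b k u ≠ 0 := by
  refine ⟨Nat.log b k, Nat.log_lt_of_lt_pow hk hn, ?_⟩
  have quotient_lt : k / b ^ Nat.log b k < b := by
    rw [Nat.div_lt_iff_lt_mul (by positivity), mul_comm, ← pow_succ]
    exact Nat.lt_pow_succ_log_self hb k
  have quotient_pos : 0 < k / b ^ Nat.log b k :=
    Nat.div_pos (Nat.pow_log_le_self b hk) (by positivity)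
  rw [bdigit, Nat.mod_eq_of_lt quotient_lt]
  exact quotient_pos.ne'

lemma natCast_bdigit_eq_zero_iff (hb : 0 < b) (k u : ℕ) :
    (bdigit b k u : ZMod b) = 0 ↔ bdigit b k u = 0 := by
  rw [ZMod.natCast_eq_zero_iff]
  exact ⟨fun h => Nat.eq_zero_of_dvd_of_lt h (Nat.mod_lt _ hb), fun h => h ▸ dvd_zero b⟩

lemma mem_bsupp (hb : 1 < b) {k u : ℕ} : u ∈ bsupp b k ↔ bdigit b k u ≠ 0 := by
  refine ⟨fun h => (Finset.mem_filter.1 h).2, fun h => Finset.mem_filter.2 ⟨?_, h⟩⟩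
  rw [Finset.mem_range]
  by_contra! hku
  have hk : k < b ^ u := (Nat.lt_of_succ_le hku).trans (Nat.lt_pow_self hb)
  exact h (by rw [bdigit, Nat.div_eq_of_lt hk, Nat.zero_mod])

lemma lt_dick_one_of_mem_bsupp {k u : ℕ} (hu : u ∈ bsupp b k) : u < dick b 1 k := by
  have sorted : ((bsupp b k).sort (· ≤ ·)).reverse.Pairwise (· ≥ ·) :=
    List.pairwise_reverse.2 (Finset.pairwise_sort _ _)
  have mem : u ∈ ((bsupp b k).sort (· ≤ ·)).reverse := by simpa using hu
  unfold dick
  match ((bsupp b k).sort (· ≤ ·)).reverse, sorted, mem with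
  | a :: L, sorted, mem =>
    have le_head : u ≤ a := by
      obtain rfl | hu := List.mem_cons.1 mem
      · exact le_rfl
      · exact (List.pairwise_cons.1 sorted).1 u hu
    simpa [Nat.lt_succ_iff] using le_head

end Digits

lemma not_linearIndepOn_of_mem_dualNet {b s n N : ℕ} (hb : 1 < b)
    {C : Fin s → Matrix (Fin n) (Fin N) (ZMod b)} {k : Fin s → ℕ} (hk : k ∈ dualNet b C)
    (hk0 : k ≠ 0) :
    ¬ LinearIndepOn (ZMod b) (fun x : Fin s × Fin n => C x.1 x.2)
      {x | bdigit b (k x.1) x.2 ≠ 0} := by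
  intro independent
  have relation : ∑ x : Fin s × Fin n, (bdigit b (k x.1) x.2 : ZMod b) • C x.1 x.2 = 0 := by
    rw [Fintype.sum_prod_type, ← hk.2]
    simp only [Matrix.mulVec_transpose, Matrix.vecMul_eq_sum, trv]
  obtain ⟨j, hj⟩ := Function.ne_iff.1 hk0
  obtain ⟨u, hu, digit_ne_zero⟩ := exists_bdigit_ne_zero hb hj (hk.1 j)
  let support : Finset (Fin s × Fin n) := {x | bdigit b (k x.1) x.2 ≠ 0}
  have relation_support :
      ∑ x ∈ support, (bdigit b (k x.1) x.2 : ZMod b) • C x.1 x.2 = 0 := by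
    rw [← relation]
    exact Finset.sum_filter_of_ne fun x _ term_ne_zero digit_eq_zero =>
      term_ne_zero (by rw [digit_eq_zero, Nat.cast_zero, zero_smul])
  have cast_digit_eq_zero : (bdigit b (k j) u : ZMod b) = 0 :=
    linearIndepOn_iff'.1 independent support _ (by simp [support]) relation_support (j, ⟨u, hu⟩)
      (by simpa [support] using digit_ne_zero)
  exact digit_ne_zero ((natCast_bdigit_eq_zero_iff (by omega) _ _).1 cast_digit_eq_zero)

section ChenSkriganov

variable {b s g w : ℕ} {β : Fin s → ℕ → ZMod b}

lemma csMatrix_row (N : ℕ) (βr : ℕ → ZMod b) (u : Fin N) :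
    csMatrix b w N βr u = hermiteRow N (βr (u / w)) (u % w) := rfl

lemma linearIndepOn_csMatrix
    (hβ : Pairwise fun p q : Fin s × Fin g => β p.1 p.2 - β q.1 q.2 ∈ (ZMod b)⁰)
    {m : Fin s → ℕ → ℕ} (hm : ∑ j, ∑ l ∈ Finset.range g, m j l ≤ g * w)
    {S : Set (Fin s × Fin (g * w))} (hS : ∀ x ∈ S, x.2.1 % w < m x.1 (x.2.1 / w)) :
    LinearIndepOn (ZMod b) (fun x => csMatrix b w (g * w) (β x.1) x.2) S := by
  have sum_le : ∑ p : Fin s × Fin g, m p.1 p.2 ≤ g * w := by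
    simpa [Fintype.sum_prod_type, Finset.sum_range] using hm
  let node (x : S) : Σ p : Fin s × Fin g, Fin (m p.1 p.2) :=
    ⟨(x.1.1, ⟨x.1.2 / w, Nat.div_lt_of_lt_mul (mul_comm g w ▸ x.1.2.2)⟩),
      ⟨x.1.2 % w, hS x x.2⟩⟩
  have node_injective : Function.Injective node := by
    intro x y h
    have coord_eq : x.1.1 = y.1.1 := congrArg (fun z => z.1.1) h
    have div_eq : x.1.2.1 / w = y.1.2.1 / w := congrArg (fun z => z.1.2.1) h
    have mod_eq : x.1.2.1 % w = y.1.2.1 % w := congrArg (fun z => z.2.1) h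
    have row_eq : x.1.2.1 = y.1.2.1 := by
      rw [← Nat.div_add_mod x.1.2.1 w, div_eq, mod_eq, Nat.div_add_mod]
    exact Subtype.ext (Prod.ext coord_eq (Fin.ext row_eq))
  simp only [csMatrix_row]
  exact (linearIndependent_hermiteRow hβ sum_le).comp node node_injective

theorem mul_lt_sum_multiplicity_of_mem_dualNet_csMatrix (hb : 1 < b)
    (hβ : Pairwise fun p q : Fin s × Fin g => β p.1 p.2 - β q.1 q.2 ∈ (ZMod b)⁰)
    {k : Fin s → ℕ} (hk : k ∈ dualNet b fun j => csMatrix b w (g * w) (β j)) (hk0 : k ≠ 0)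
    {m : Fin s → ℕ → ℕ}
    (hm : ∀ j, ∀ u < g * w, bdigit b (k j) u ≠ 0 → u % w < m j (u / w)) :
    g * w < ∑ j, ∑ l ∈ Finset.range g, m j l := by
  by_contra! sum_le
  exact not_linearIndepOn_of_mem_dualNet hb hk hk0 <|
    linearIndepOn_csMatrix hβ sum_le fun x hx => hm x.1 x.2 x.2.2 hx

theorem lt_hammingVec_of_mem_dualNet_csMatrix (hb : 1 < b)
    (hβ : Pairwise fun p q : Fin s × Fin g => β p.1 p.2 - β q.1 q.2 ∈ (ZMod b)⁰)
    {k : Fin s → ℕ} (hk : k ∈ dualNet b fun j => csMatrix b w (g * w) (β j)) (hk0 : k ≠ 0) :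
    g < hammingVec b k := by
  let blocks (j : Fin s) : Finset ℕ := (bsupp b (k j)).image (· / w)
  have covers : ∀ j, ∀ u < g * w, bdigit b (k j) u ≠ 0 →
      u % w < if u / w ∈ blocks j then w else 0 := by
    intro j u hu digit_ne_zero
    rw [if_pos (Finset.mem_image_of_mem _ ((mem_bsupp hb).2 digit_ne_zero))]
    exact Nat.mod_lt u (pos_of_mul_pos_right (by omega : 0 < g * w) g.zero_le)
  have block_sum_le (j : Fin s) :
      ∑ l ∈ Finset.range g, (if l ∈ blocks j then w else 0) ≤ hamming b (k j) * w := by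
    rw [← Finset.sum_filter, Finset.sum_const, smul_eq_mul]
    gcongr
    exact (Finset.card_le_card fun l hl => (Finset.mem_filter.1 hl).2).trans Finset.card_image_le
  refine lt_of_mul_lt_mul_right ?_ w.zero_le
  calc g * w
      < ∑ j, ∑ l ∈ Finset.range g, (if l ∈ blocks j then w else 0) :=
        mul_lt_sum_multiplicity_of_mem_dualNet_csMatrix hb hβ hk hk0 covers
    _ ≤ ∑ j, hamming b (k j) * w := Finset.sum_le_sum fun j _ => block_sum_le j
    _ = hammingVec b k * w := by rw [hammingVec, Finset.sum_mul]

lemma sum_range_min_sub_mul (w d g : ℕ) :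
    ∑ l ∈ Finset.range g, min w (d - l * w) = min (g * w) d := by
  induction g with
  | zero => simp
  | succ g ih =>
    rw [Finset.sum_range_succ, ih, Nat.succ_mul]
    omega

theorem mul_lt_dickVec_one_of_mem_dualNet_csMatrix (hb : 1 < b)
    (hβ : Pairwise fun p q : Fin s × Fin g => β p.1 p.2 - β q.1 q.2 ∈ (ZMod b)⁰)
    {k : Fin s → ℕ} (hk : k ∈ dualNet b fun j => csMatrix b w (g * w) (β j)) (hk0 : k ≠ 0) :
    g * w < dickVec b 1 k := by
  have covers : ∀ j, ∀ u < g * w, bdigit b (k j) u ≠ 0 →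
      u % w < min w (dick b 1 (k j) - u / w * w) := by
    intro j u hu digit_ne_zero
    have u_lt : u < dick b 1 (k j) := lt_dick_one_of_mem_bsupp ((mem_bsupp hb).2 digit_ne_zero)
    have w_pos : 0 < w := pos_of_mul_pos_right (by omega : 0 < g * w) g.zero_le
    have mod_lt : u % w < w := Nat.mod_lt u w_pos
    have div_add_mod : u / w * w + u % w = u := Nat.div_add_mod' u w
    omega
  calc g * w
      < ∑ j, ∑ l ∈ Finset.range g, min w (dick b 1 (k j) - l * w) :=
        mul_lt_sum_multiplicity_of_mem_dualNet_csMatrix hb hβ hk hk0 covers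
    _ ≤ ∑ j, dick b 1 (k j) := Finset.sum_le_sum fun j _ => by
        rw [sum_range_min_sub_mul]
        exact min_le_right _ _
    _ = dickVec b 1 k := rfl

theorem chen_skriganov_metrics_general (hb : 1 < b)
    (hβ : Pairwise fun p q : Fin s × Fin g => β p.1 p.2 - β q.1 q.2 ∈ (ZMod b)⁰) :
    ∀ k ∈ dualNet b (fun j => csMatrix b w (g * w) (β j)), k ≠ 0 →
      g + 1 ≤ hammingVec b k ∧ g * w + 1 ≤ dickVec b 1 k :=
  fun _ hk hk0 => ⟨lt_hammingVec_of_mem_dualNet_csMatrix hb hβ hk hk0,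
    mul_lt_dickVec_one_of_mem_dualNet_csMatrix hb hβ hk hk0⟩

end ChenSkriganov

/-- Chen–Skriganov. For `s, g, w ∈ ℕ` and a prime `b ≥ gs`, the
Chen–Skriganov digital net `P` over `F_b` with `b^{gw}` points in `[0,1)^s` satisfies
`κ(P) ≥ g + 1` and `μ_1(P) ≥ gw + 1`. -/
theorem chen_skriganov_metrics
    (b s g w : ℕ) (hb : b.Prime) (hs : 0 < s) (hg : 0 < g) (hw : 0 < w)
    (hbs : g * s ≤ b) (βe : ℕ → ℕ → ZMod b)
    (hdist : ∀ j l j' l', j < s → l < g → j' < s → l' < g →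
      βe j l = βe j' l' → j = j' ∧ l = l') :
    ∀ k ∈ dualNet b (fun j : Fin s => csMatrix b w (g * w) (βe j.1)), k ≠ 0 →
      g + 1 ≤ hammingVec b k ∧ g * w + 1 ≤ dickVec b 1 k := by
  have : Fact b.Prime := ⟨hb⟩
  refine chen_skriganov_metrics_general hb.one_lt fun p q hpq =>
    mem_nonZeroDivisors_of_ne_zero <| sub_ne_zero.2 fun h => hpq ?_
  obtain ⟨hj, hl⟩ := hdist _ _ _ _ p.1.2 p.2.2 q.1.2 q.2.2 h
  exact Prod.ext (Fin.ext hj) (Fin.ext hl)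
end

section
/- Let b be a prime and let 1 ≤ α' < α and 0 ≤ t ≤ αm. Any order α digital (t, m, s)-net over F_b is also an order α' digital (t', m, s)-net over F_b with t' = ⌈t α'/α⌉. -/
/-!
Write `μ_α` for the sum of the `α` largest row indices chosen from a matrix (`topSum α`). In a
decreasing list every entry after the first `α'` is at most each of those, so the average of the
first `k` entries, padded with zeros, decreases in `k`; hence `α' μ_α ≤ α μ_{α'}` for `α' ≤ α`.
The ceiling `t'` satisfies `α' t ≤ α t'`, so rows with `∑ μ_{α'} + t' ≤ α' m` satisfy
`α' (∑ μ_α + t) ≤ α (∑ μ_{α'} + t') ≤ α' α m`, and the order `α` condition applies to them.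
-/

open scoped BigOperators

section ListSums

variable {M : Type*} [AddCommMonoid M] [Preorder M] [IsOrderedAddMonoid M]

lemma length_nsmul_sum_le_length_nsmul_sum {l₁ l₂ : List M} (h : ∀ a ∈ l₁, ∀ b ∈ l₂, b ≤ a) :
    l₁.length • l₂.sum ≤ l₂.length • l₁.sum := by
  induction l₂ with
  | nil => simp
  | cons b l₂ ih =>
    have h_head : l₁.length • b ≤ l₁.sum :=
      l₁.card_nsmul_le_sum b fun a ha ↦ h a ha b List.mem_cons_self
    have h_tail : l₁.length • l₂.sum ≤ l₂.length • l₁.sum :=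
      ih fun a ha c hc ↦ h a ha c (List.mem_cons_of_mem b hc)
    rw [List.sum_cons, List.length_cons, nsmul_add, succ_nsmul']
    exact add_le_add h_head h_tail

lemma nsmul_sum_take_le_nsmul_sum_take {l : List M} (hl : l.SortedGE) (hl₀ : ∀ a ∈ l, 0 ≤ a)
    {j k : ℕ} (hjk : j ≤ k) : j • (l.take k).sum ≤ k • (l.take j).sum := by
  obtain ⟨d, rfl⟩ := Nat.exists_eq_add_of_le hjk
  have h_head_nonneg : 0 ≤ (l.take j).sum :=
    List.sum_nonneg fun a ha ↦ hl₀ a (List.mem_of_mem_take ha)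
  have h_block : j • ((l.drop j).take d).sum ≤ d • (l.take j).sum := by
    rcases le_total l.length j with h_short | h_long
    · simpa [List.drop_eq_nil_of_le h_short] using nsmul_nonneg h_head_nonneg d
    · calc j • ((l.drop j).take d).sum
          = (l.take j).length • ((l.drop j).take d).sum := by
            rw [List.length_take_of_le h_long]
        _ ≤ ((l.drop j).take d).length • (l.take j).sum :=
            length_nsmul_sum_le_length_nsmul_sum fun a ha b hb ↦
              hl.pairwise.rel_of_mem_take_of_mem_drop ha (List.mem_of_mem_take hb)
        _ ≤ d • (l.take j).sum :=
            nsmul_le_nsmul_left h_head_nonneg (List.length_take_le d _)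
  rw [List.take_add, List.sum_append, nsmul_add, add_nsmul]
  gcongr

end ListSums

lemma mul_topSum_le_mul_topSum (R : Finset ℕ) {α' α : ℕ} (hαα : α' ≤ α) :
    α' * topSum α R ≤ α * topSum α' R := by
  have h_sorted : ((R.sort (· ≤ ·)).reverse.map (· + 1)).SortedGE :=
    (strictMono_id.add_const 1).sortedGE_listMap.2 R.sortedLT_sort.sortedLE.reverse
  simpa only [topSum, List.map_take, smul_eq_mul] using
    nsmul_sum_take_le_nsmul_sum_take h_sorted (fun _ _ ↦ Nat.zero_le _) hαα

lemma ceil_natCast_div_natCast_le_iff {K : Type*} [Field K] [LinearOrder K]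
    [IsStrictOrderedRing K] [FloorSemiring K] {p q r : ℕ} (hq : 0 < q) :
    ⌈(p : K) / q⌉₊ ≤ r ↔ p ≤ r * q := by
  rw [Nat.ceil_le, div_le_iff₀ (Nat.cast_pos.2 hq)]
  norm_cast

theorem propagation_rule_general {b s n m α α' t : ℕ} (hα' : 1 ≤ α') (hαα : α' ≤ α)
    (ht : t ≤ α * m) {C : Fin s → Matrix (Fin n) (Fin m) (ZMod b)} (h : isOrderNet b α t m C) :
    isOrderNet b α' ⌈(t * α' : ℚ) / α⌉₊ m C := by
  intro R hR
  apply h R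
  have ht'_le_iff (r : ℕ) : ⌈(t * α' : ℚ) / α⌉₊ ≤ r ↔ t * α' ≤ r * α := by
    simpa only [Nat.cast_mul] using
      ceil_natCast_div_natCast_le_iff (K := ℚ) (p := t * α') (r := r) (hα'.trans hαα)
  set t' := ⌈(t * α' : ℚ) / α⌉₊
  have ht' : t * α' ≤ t' * α := (ht'_le_iff t').1 le_rfl
  have ht'm : t' ≤ α' * m := (ht'_le_iff _).2 (by linarith [Nat.mul_le_mul_right α' ht])
  have h_topSum : α' * ∑ j, topSum α ((R j).image Fin.val) ≤
      α * ∑ j, topSum α' ((R j).image Fin.val) := by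
    simp only [Finset.mul_sum]
    exact Finset.sum_le_sum fun j _ ↦ mul_topSum_le_mul_topSum _ hαα
  refine Nat.le_sub_of_add_le (Nat.le_of_mul_le_mul_left ?_ hα')
  calc α' * (∑ j, topSum α ((R j).image Fin.val) + t)
      ≤ α * (∑ j, topSum α' ((R j).image Fin.val) + t') := by linarith
    _ ≤ α * (α' * m) := Nat.mul_le_mul_left α (Nat.add_le_of_le_sub ht'm hR)
    _ = α' * (α * m) := Nat.mul_left_comm α α' m

/-- propagation property. For `1 ≤ α' < α` and `0 ≤ t ≤ αm`, any order
`α` digital `(t,m,s)`-net over `F_b` is also an order `α'` digital `(t',m,s)`-net over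
`F_b` with `t' = ⌈t α'/α⌉`. -/
theorem propagation_rule
    (b s n m α α' t : ℕ) (hb : b.Prime) (hα' : 1 ≤ α') (hαα : α' < α)
    (ht : t ≤ α * m) (hn : α * m ≤ n)
    (C : Fin s → Matrix (Fin n) (Fin m) (ZMod b))
    (h : isOrderNet b α t m C) :
    isOrderNet b α' (Nat.ceil ((t * α' : ℚ) / (α : ℚ))) m C :=
  propagation_rule_general hα' hαα.le ht h
end
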